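/- Let (▷,σ) be a cocycle datum for a Hopf algebra H on an algebra B, and let χ : H⊗H → k be a Drinfeld 2-cocycle on H. Define the twisted product h•g := χ(h_{(1)},g_{(1)}) h_{(2)}g_{(2)} χ⁻¹(h_{(3)},g_{(3)}) on H and σ_χ(h,g) := σ(h_{(1)},g_{(1)})χ⁻¹(h_{(2)},g_{(2)}). Then (▷, σ_χ) is a cocycle datum with respect to the multiplication •: σ_χ is convolution invertible with inverse σ_χ⁻¹(h,g) = χ(h_{(1)},g_{(1)})σ⁻¹(h_{(2)},g_{(2)}); σ_χ(h,1) = σ_χ(1,h) = ε(h)1; h▷(g▷b) = σ_χ(h_{(1)},g_{(1)})((h_{(2)}•g_{(2)})▷b)σ_χ⁻¹(h_{(3)},g_{(3)}); and (h_{(1)}▷σ_χ(g_{(1)},f_{(1)}))σ_χ(h_{(2)}, g_{(2)}•f_{(2)}) = σ_χ(h_{(1)},g_{(1)})σ_χ(h_{(2)}•g_{(2)}, f) for all h,g,f ∈ H and b ∈ B. -/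

import Mathlib

/-!
All the identities take place in convolution algebras. Write `S`, `X` for `σ` and `χ` (the latter
with values in `k · 1 ⊆ B`) in `Hom(H ⊗ H, B)`. Then `σ_χ = S * X⁻¹`, its claimed inverse is
`X * S⁻¹`, and for every linear map `v` out of `H` the map `v(h • g)` is `X * v(hg) * X⁻¹` (`hT`).
Invertibility and the twisted-module condition follow by cancelling `X⁻¹ * X`; normalisation
holds because `χ⁻¹(h, 1) = χ⁻¹(1, h) = ε(h)`.

For the cocycle condition work in `Hom(H ⊗ H ⊗ H, B)`, and put `A = h ▷ σ(g, f)`,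
`inflL φ = ε(h) φ(g, f)`, `inflR φ = φ(h, g) ε(f)`, `mulR φ = φ(h, gf)`, `mulL φ = φ(hg, f)`.
These last four operations are multiplicative and unital. The hypotheses are
`A * mulR S = inflR S * mulL S` and `inflL X * mulR X = inflR X * mulL X`, and the two sides of the
claim become
`A * inflL X⁻¹ * (inflL X * mulR S * mulR X⁻¹ * inflL X⁻¹) = A * mulR S * (inflL X * mulR X)⁻¹` and
`inflR S * inflR X⁻¹ * (inflR X * mulL S * mulL X⁻¹ * inflR X⁻¹)
  = inflR S * mulL S * (inflR X * mulL X)⁻¹`.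
-/

open scoped TensorProduct
open Coalgebra

noncomputable section

section SweedlerDefs

variable (k : Type*) [Field k]
variable (H : Type*) [Ring H] [Bialgebra k H]

/-- Left-nested triple comultiplication `h ↦ (h₍₁₎ ⊗ h₍₂₎) ⊗ h₍₃₎`. -/
def Δ3 : H →ₗ[k] (H ⊗[k] H) ⊗[k] H :=
  (LinearMap.rTensor H (Coalgebra.comul (R := k) (A := H))) ∘ₗ Coalgebra.comul

/-- Left-nested fourfold comultiplication. -/
def Δ4 : H →ₗ[k] ((H ⊗[k] H) ⊗[k] H) ⊗[k] H :=
  (LinearMap.rTensor H (Δ3 k H)) ∘ₗ Coalgebra.comul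

/-- Left-nested fivefold comultiplication. -/
def Δ5 : H →ₗ[k] (((H ⊗[k] H) ⊗[k] H) ⊗[k] H) ⊗[k] H :=
  (LinearMap.rTensor H (Δ4 k H)) ∘ₗ Coalgebra.comul

/-- Left-nested sixfold comultiplication. -/
def Δ6 : H →ₗ[k] ((((H ⊗[k] H) ⊗[k] H) ⊗[k] H) ⊗[k] H) ⊗[k] H :=
  (LinearMap.rTensor H (Δ5 k H)) ∘ₗ Coalgebra.comul

/-- `IsRep2 k H h h1 h2` says that `Δh = ∑ᵢ h1 i ⊗ h2 i`, i.e. the families `h1, h2`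
realise the Sweedler legs `h₍₁₎ ⊗ h₍₂₎`. -/
def IsRep2 {n : ℕ} (h : H) (h1 h2 : Fin n → H) : Prop :=
  Coalgebra.comul (R := k) h = ∑ i, h1 i ⊗ₜ[k] h2 i

/-- A representation of the Sweedler legs `h₍₁₎ ⊗ h₍₂₎ ⊗ h₍₃₎`. -/
def IsRep3 {n : ℕ} (h : H) (h1 h2 h3 : Fin n → H) : Prop :=
  Δ3 k H h = ∑ i, (h1 i ⊗ₜ[k] h2 i) ⊗ₜ[k] h3 i

/-- A representation of the Sweedler legs `h₍₁₎ ⊗ h₍₂₎ ⊗ h₍₃₎ ⊗ h₍₄₎`. -/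
def IsRep4 {n : ℕ} (h : H) (h1 h2 h3 h4 : Fin n → H) : Prop :=
  Δ4 k H h = ∑ i, ((h1 i ⊗ₜ[k] h2 i) ⊗ₜ[k] h3 i) ⊗ₜ[k] h4 i

/-- A representation of the Sweedler legs `h₍₁₎ ⊗ ⋯ ⊗ h₍₅₎`. -/
def IsRep5 {n : ℕ} (h : H) (h1 h2 h3 h4 h5 : Fin n → H) : Prop :=
  Δ5 k H h = ∑ i, (((h1 i ⊗ₜ[k] h2 i) ⊗ₜ[k] h3 i) ⊗ₜ[k] h4 i) ⊗ₜ[k] h5 i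

/-- A representation of the Sweedler legs `h₍₁₎ ⊗ ⋯ ⊗ h₍₆₎`. -/
def IsRep6 {n : ℕ} (h : H) (h1 h2 h3 h4 h5 h6 : Fin n → H) : Prop :=
  Δ6 k H h = ∑ i, ((((h1 i ⊗ₜ[k] h2 i) ⊗ₜ[k] h3 i) ⊗ₜ[k] h4 i) ⊗ₜ[k] h5 i) ⊗ₜ[k] h6 i

/-- A Drinfeld 2-cocycle `χ : H ⊗ H → k` with convolution inverse `χi`. -/
structure DrinfeldCocycle (χ χi : H →ₗ[k] H →ₗ[k] k) : Prop where
  conv_left : ∀ (h g : H) {n m : ℕ} (h1 h2 : Fin n → H) (g1 g2 : Fin m → H),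
    IsRep2 k H h h1 h2 → IsRep2 k H g g1 g2 →
    ∑ i, ∑ j, χ (h1 i) (g1 j) * χi (h2 i) (g2 j)
      = Coalgebra.counit (R := k) h * Coalgebra.counit (R := k) g
  conv_right : ∀ (h g : H) {n m : ℕ} (h1 h2 : Fin n → H) (g1 g2 : Fin m → H),
    IsRep2 k H h h1 h2 → IsRep2 k H g g1 g2 →
    ∑ i, ∑ j, χi (h1 i) (g1 j) * χ (h2 i) (g2 j)
      = Coalgebra.counit (R := k) h * Coalgebra.counit (R := k) g
  cocycle : ∀ (h g f : H) {n m p : ℕ} (h1 h2 : Fin n → H) (g1 g2 : Fin m → H)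
      (f1 f2 : Fin p → H),
    IsRep2 k H h h1 h2 → IsRep2 k H g g1 g2 → IsRep2 k H f f1 f2 →
    ∑ j, ∑ l, χ (g1 j) (f1 l) * χ h (g2 j * f2 l)
      = ∑ i, ∑ j, χ (h1 i) (g1 j) * χ (h2 i * g2 j) f
  one_cocy : ∀ h : H, χ 1 h = Coalgebra.counit (R := k) h
  cocy_one : ∀ h : H, χ h 1 = Coalgebra.counit (R := k) h

/-- The twisted product `h • g = χ(h₍₁₎,g₍₁₎) h₍₂₎g₍₂₎ χ⁻¹(h₍₃₎,g₍₃₎)` of the Drinfeld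
cotwist `H^χ`, given as a bilinear map `tmul`. -/
def IsTwistedMul (χ χi : H →ₗ[k] H →ₗ[k] k) (tmul : H →ₗ[k] H →ₗ[k] H) : Prop :=
  ∀ (h g : H) {n m : ℕ} (h1 h2 h3 : Fin n → H) (g1 g2 g3 : Fin m → H),
    IsRep3 k H h h1 h2 h3 → IsRep3 k H g g1 g2 g3 →
    tmul h g = ∑ i, ∑ j, (χ (h1 i) (g1 j) * χi (h3 i) (g3 j)) • (h2 i * g2 j)

/-- A coquasitriangular structure `r` on `H`, with convolution inverse `ri`. -/
structure Coquasitriangular (r ri : H →ₗ[k] H →ₗ[k] k) : Prop where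
  conv_left : ∀ (h g : H) {n m : ℕ} (h1 h2 : Fin n → H) (g1 g2 : Fin m → H),
    IsRep2 k H h h1 h2 → IsRep2 k H g g1 g2 →
    ∑ i, ∑ j, r (h1 i) (g1 j) * ri (h2 i) (g2 j)
      = Coalgebra.counit (R := k) h * Coalgebra.counit (R := k) g
  conv_right : ∀ (h g : H) {n m : ℕ} (h1 h2 : Fin n → H) (g1 g2 : Fin m → H),
    IsRep2 k H h h1 h2 → IsRep2 k H g g1 g2 →
    ∑ i, ∑ j, ri (h1 i) (g1 j) * r (h2 i) (g2 j)
      = Coalgebra.counit (R := k) h * Coalgebra.counit (R := k) g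
  braid : ∀ (h g : H) {n m : ℕ} (h1 h2 : Fin n → H) (g1 g2 : Fin m → H),
    IsRep2 k H h h1 h2 → IsRep2 k H g g1 g2 →
    ∑ i, ∑ j, r (h2 i) (g2 j) • (g1 j * h1 i) = ∑ i, ∑ j, r (h1 i) (g1 j) • (h2 i * g2 j)
  mul_right : ∀ (h g f : H) {n : ℕ} (h1 h2 : Fin n → H), IsRep2 k H h h1 h2 →
    r h (g * f) = ∑ i, r (h1 i) g * r (h2 i) f
  mul_left : ∀ (h g f : H) {n : ℕ} (f1 f2 : Fin n → H), IsRep2 k H f f1 f2 →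
    r (h * g) f = ∑ i, r h (f1 i) * r g (f2 i)

variable (B : Type*) [Ring B] [Algebra k B]

/-- `u, ui : H → B` are convolution inverses of each other. -/
def ConvInv (u ui : H →ₗ[k] B) : Prop :=
  ∀ (h : H) {n : ℕ} (h1 h2 : Fin n → H), IsRep2 k H h h1 h2 →
    ∑ i, u (h1 i) * ui (h2 i) = Coalgebra.counit (R := k) h • (1 : B)
    ∧ ∑ i, ui (h1 i) * u (h2 i) = Coalgebra.counit (R := k) h • (1 : B)

/-- A measuring of `H` on `B`:  `h ▷ (ab) = (h₍₁₎ ▷ a)(h₍₂₎ ▷ b)` and `h ▷ 1 = ε(h)1`. -/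
structure Measuring (act : H →ₗ[k] B →ₗ[k] B) : Prop where
  act_mul : ∀ (h : H) (a b : B) {n : ℕ} (h1 h2 : Fin n → H),
    IsRep2 k H h h1 h2 → act h (a * b) = ∑ i, act (h1 i) a * act (h2 i) b
  act_one : ∀ h : H, act h 1 = Coalgebra.counit (R := k) h • (1 : B)

/-- A cocycle datum `(▷, σ)` (with chosen convolution inverse `σi` of `σ`). -/
structure CocycleDatum (act : H →ₗ[k] B →ₗ[k] B) (σ σi : H →ₗ[k] H →ₗ[k] B) : Prop where
  toMeasuring : Measuring k H B act
  conv_left : ∀ (h g : H) {n m : ℕ} (h1 h2 : Fin n → H) (g1 g2 : Fin m → H),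
    IsRep2 k H h h1 h2 → IsRep2 k H g g1 g2 →
    ∑ i, ∑ j, σ (h1 i) (g1 j) * σi (h2 i) (g2 j)
      = (Coalgebra.counit (R := k) h * Coalgebra.counit (R := k) g) • (1 : B)
  conv_right : ∀ (h g : H) {n m : ℕ} (h1 h2 : Fin n → H) (g1 g2 : Fin m → H),
    IsRep2 k H h h1 h2 → IsRep2 k H g g1 g2 →
    ∑ i, ∑ j, σi (h1 i) (g1 j) * σ (h2 i) (g2 j)
      = (Coalgebra.counit (R := k) h * Coalgebra.counit (R := k) g) • (1 : B)
  one_act : ∀ b : B, act 1 b = b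
  act_act : ∀ (h g : H) (b : B) {n m : ℕ} (h1 h2 h3 : Fin n → H) (g1 g2 g3 : Fin m → H),
    IsRep3 k H h h1 h2 h3 → IsRep3 k H g g1 g2 g3 →
    act h (act g b) = ∑ i, ∑ j, σ (h1 i) (g1 j) * act (h2 i * g2 j) b * σi (h3 i) (g3 j)
  sigma_one : ∀ h : H, σ h 1 = Coalgebra.counit (R := k) h • (1 : B)
  one_sigma : ∀ h : H, σ 1 h = Coalgebra.counit (R := k) h • (1 : B)
  cocycle : ∀ (h g f : H) {n m p : ℕ} (h1 h2 : Fin n → H) (g1 g2 : Fin m → H)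
      (f1 f2 : Fin p → H),
    IsRep2 k H h h1 h2 → IsRep2 k H g g1 g2 → IsRep2 k H f f1 f2 →
    ∑ i, ∑ j, ∑ l, act (h1 i) (σ (g1 j) (f1 l)) * σ (h2 i) (g2 j * f2 l)
      = ∑ i, ∑ j, σ (h1 i) (g1 j) * σ (h2 i * g2 j) f

/-- The cocycle cross product multiplication on `P = B ⊗ H`:
`(b#h)(c#g) = b(h₍₁₎▷c)σ(h₍₂₎,g₍₁₎) # h₍₃₎g₍₂₎`, given as a bilinear map `mult`. -/
def IsCrossMul (act : H →ₗ[k] B →ₗ[k] B) (σ : H →ₗ[k] H →ₗ[k] B)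
    (mult : B ⊗[k] H →ₗ[k] B ⊗[k] H →ₗ[k] B ⊗[k] H) : Prop :=
  ∀ (b c : B) (h g : H) {n m : ℕ} (h1 h2 h3 : Fin n → H) (g1 g2 : Fin m → H),
    IsRep3 k H h h1 h2 h3 → IsRep2 k H g g1 g2 →
    mult (b ⊗ₜ[k] h) (c ⊗ₜ[k] g)
      = ∑ i, ∑ j, (b * act (h1 i) c * σ (h2 i) (g1 j)) ⊗ₜ[k] (h3 i * g2 j)

end SweedlerDefs

section HopfDefs

variable (k : Type*) [Field k]
variable (H : Type*) [Ring H] [HopfAlgebra k H]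
variable (B : Type*) [Ring B] [Algebra k B]

/-- The cocycle Hopf algebroid multiplication on `B ⊗ B ⊗ H`:
`(b⊗b'⊗h)(c⊗c'⊗g) = b(h₍₁₎▷c)σ(h₍₂₎,g₍₁₎) ⊗ c'(S(g₍₄₎)▷b')σ(S(g₍₃₎),S(h₍₄₎)) ⊗ h₍₃₎g₍₂₎`,
given as a bilinear map `mult`. -/
def IsAlgebroidMul (act : H →ₗ[k] B →ₗ[k] B) (σ : H →ₗ[k] H →ₗ[k] B)
    (mult : B ⊗[k] (B ⊗[k] H) →ₗ[k] B ⊗[k] (B ⊗[k] H) →ₗ[k] B ⊗[k] (B ⊗[k] H)) : Prop :=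
  ∀ (b b' c c' : B) (h g : H) {n m : ℕ}
    (h1 h2 h3 h4 : Fin n → H) (g1 g2 g3 g4 : Fin m → H),
    IsRep4 k H h h1 h2 h3 h4 → IsRep4 k H g g1 g2 g3 g4 →
    mult (b ⊗ₜ[k] (b' ⊗ₜ[k] h)) (c ⊗ₜ[k] (c' ⊗ₜ[k] g))
      = ∑ i, ∑ j, (b * act (h1 i) c * σ (h2 i) (g1 j)) ⊗ₜ[k]
          ((c' * act (HopfAlgebra.antipode (R := k) (g4 j)) b'
              * σ (HopfAlgebra.antipode (R := k) (g3 j))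
                  (HopfAlgebra.antipode (R := k) (h4 i))) ⊗ₜ[k] (h3 i * g2 j))

end HopfDefs

/-! ### Convolution algebras on `H ⊗ H` and `H ⊗ H ⊗ H` -/

section Convolution

open WithConv TensorProduct

variable {k : Type*} [Field k]
variable {H : Type*} [Ring H] [Bialgebra k H]
variable {B : Type*} [Ring B] [Algebra k B]

/-- A `B`-valued bilinear map on `H`, as an element of the convolution algebra
`Hom(H ⊗ H, B)`. -/
def bmap (σ : H →ₗ[k] H →ₗ[k] B) : WithConv (H ⊗[k] H →ₗ[k] B) := toConv (lift σ)

variable (B) in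
/-- A scalar-valued bilinear map on `H`, as an element of the convolution algebra
`Hom(H ⊗ H, B)` with values in `k · 1`. -/
def smap (χ : H →ₗ[k] H →ₗ[k] k) : WithConv (H ⊗[k] H →ₗ[k] B) :=
  toConv (Algebra.linearMap k B ∘ₗ lift χ)

@[simp] lemma bmap_tmul (σ : H →ₗ[k] H →ₗ[k] B) (h g : H) : bmap σ (h ⊗ₜ g) = σ h g := rfl

@[simp] lemma smap_tmul (χ : H →ₗ[k] H →ₗ[k] k) (h g : H) :
    smap B χ (h ⊗ₜ g) = algebraMap k B (χ h g) := rfl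

lemma exists_isRep2 (h : H) : ∃ (n : ℕ) (h1 h2 : Fin n → H), IsRep2 k H h h1 h2 := by
  obtain ⟨n, a, b, e⟩ := TensorProduct.exists_sum_tmul_eq (Coalgebra.comul (R := k) h)
  exact ⟨n, a, b, e⟩

lemma conv_tmul {D : Type*} [AddCommGroup D] [Module k D] [Coalgebra k D]
    (φ ψ : WithConv (H ⊗[k] D →ₗ[k] B)) (h : H) (y : D) {n m : ℕ}
    {h1 h2 : Fin n → H} {y1 y2 : Fin m → D} (hh : IsRep2 k H h h1 h2)
    (hy : Coalgebra.comul (R := k) y = ∑ j, y1 j ⊗ₜ[k] y2 j) :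
    (φ * ψ) (h ⊗ₜ y) = ∑ i, ∑ j, φ (h1 i ⊗ₜ y1 j) * ψ (h2 i ⊗ₜ y2 j) := by
  rw [IsRep2] at hh
  rw [LinearMap.convMul_apply, TensorProduct.comul_tmul, hh, hy]
  simp [TensorProduct.sum_tmul, TensorProduct.tmul_sum]
  exact Finset.sum_comm

lemma conv_tmul_tmul (φ ψ : WithConv (H ⊗[k] (H ⊗[k] H) →ₗ[k] B)) (h g f : H) {n m p : ℕ}
    {h1 h2 : Fin n → H} {g1 g2 : Fin m → H} {f1 f2 : Fin p → H} (hh : IsRep2 k H h h1 h2)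
    (hg : IsRep2 k H g g1 g2) (hf : IsRep2 k H f f1 f2) :
    (φ * ψ) (h ⊗ₜ (g ⊗ₜ f)) = ∑ i, ∑ j, ∑ l,
      φ (h1 i ⊗ₜ (g1 j ⊗ₜ f1 l)) * ψ (h2 i ⊗ₜ (g2 j ⊗ₜ f2 l)) := by
  rw [IsRep2] at hh hg hf
  rw [LinearMap.convMul_apply, TensorProduct.comul_tmul, TensorProduct.comul_tmul, hh, hg, hf]
  simp [TensorProduct.sum_tmul, TensorProduct.tmul_sum]
  rw [Finset.sum_comm]
  refine (Finset.sum_congr rfl fun j _ => Finset.sum_comm).trans ?_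
  exact Finset.sum_comm

/-- The threefold convolution product factors through `Δ ⊗ id` on both tensor factors, which is
what lets it be evaluated on the left-nested legs given by `Δ3`. -/
lemma conv_assoc_aux (φ ψ θ : WithConv (H ⊗[k] H →ₗ[k] B)) (x y : H ⊗[k] H) :
    LinearMap.mul' k B (map (φ * ψ).ofConv θ.ofConv
      (TensorProduct.tensorTensorTensorComm k H H H H (x ⊗ₜ y))) =
    LinearMap.mul' k B (map (LinearMap.mul' k B ∘ₗ map φ.ofConv ψ.ofConv ∘ₗ
        (TensorProduct.tensorTensorTensorComm k H H H H).toLinearMap) θ.ofConv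
      (TensorProduct.tensorTensorTensorComm k (H ⊗[k] H) H (H ⊗[k] H) H
        (LinearMap.rTensor H Coalgebra.comul x ⊗ₜ LinearMap.rTensor H Coalgebra.comul y))) := by
  induction x with
  | zero => simp
  | add x x' hx hx' => simp only [TensorProduct.add_tmul, map_add, hx, hx']
  | tmul a b =>
    induction y with
    | zero => simp
    | add x x' hx hx' => simp only [TensorProduct.tmul_add, map_add, hx, hx']
    | tmul c d => simp [TensorProduct.comul_tmul]; rfl

/-- A threefold convolution product on `H ⊗ H` can be computed with any choice of Sweedler
legs. -/
lemma conv_conv_tmul (φ ψ θ : WithConv (H ⊗[k] H →ₗ[k] B)) (h g : H) {n m : ℕ}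
    {h1 h2 h3 : Fin n → H} {g1 g2 g3 : Fin m → H} (hh : IsRep3 k H h h1 h2 h3)
    (hg : IsRep3 k H g g1 g2 g3) :
    (φ * ψ * θ) (h ⊗ₜ g) = ∑ i, ∑ j,
      φ (h1 i ⊗ₜ g1 j) * ψ (h2 i ⊗ₜ g2 j) * θ (h3 i ⊗ₜ g3 j) := by
  have h0 : (φ * ψ * θ) (h ⊗ₜ g) = _ :=
    conv_assoc_aux φ ψ θ (Coalgebra.comul (R := k) h) (Coalgebra.comul (R := k) g)
  rw [h0]
  rw [IsRep3, Δ3, LinearMap.comp_apply] at hh hg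
  rw [hh, hg]
  simp [TensorProduct.sum_tmul, TensorProduct.tmul_sum]
  exact Finset.sum_comm

lemma exists_isRep3 (h : H) : ∃ (n : ℕ) (h1 h2 h3 : Fin n → H), IsRep3 k H h h1 h2 h3 := by
  suffices H3 : ∀ x : (H ⊗[k] H) ⊗[k] H, ∃ (n : ℕ) (h1 h2 h3 : Fin n → H),
      x = ∑ i, (h1 i ⊗ₜ[k] h2 i) ⊗ₜ[k] h3 i from H3 (Δ3 k H h)
  intro x
  induction x with
  | zero => exact ⟨0, Fin.elim0, Fin.elim0, Fin.elim0, by simp⟩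
  | tmul y c =>
    obtain ⟨n, a, b, rfl⟩ := TensorProduct.exists_sum_tmul_eq y
    exact ⟨n, a, b, fun _ => c, TensorProduct.sum_tmul _ _ _⟩
  | add x y hx hy =>
    obtain ⟨n, a, b, c, rfl⟩ := hx
    obtain ⟨m, d, e, r, rfl⟩ := hy
    exact ⟨n + m, Fin.addCases a d, Fin.addCases b e, Fin.addCases c r,
      by simp [Fin.sum_univ_add]⟩

/-- The map `Q(h ⊗ -)`, for `Q` on `H ⊗ D`. -/
def slice {D : Type*} [AddCommGroup D] [Module k D]
    (Q : WithConv (H ⊗[k] D →ₗ[k] B)) (h : H) : WithConv (D →ₗ[k] B) :=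
  toConv (curry Q.ofConv h)

/-- The map `h ⊗ g ↦ Q(h ⊗ g ⊗ f)`. -/
def sliceR (Q : WithConv (H ⊗[k] (H ⊗[k] H) →ₗ[k] B)) (f : H) : WithConv (H ⊗[k] H →ₗ[k] B) :=
  toConv (curry (Q.ofConv ∘ₗ (TensorProduct.assoc k H H H).toLinearMap) |>.flip f)

/-- The map `h ⊗ g ⊗ f ↦ ε(h) φ(g ⊗ f)`. -/
def inflL (φ : WithConv (H ⊗[k] H →ₗ[k] B)) : WithConv (H ⊗[k] (H ⊗[k] H) →ₗ[k] B) :=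
  toConv (lift (LinearMap.smulRight Coalgebra.counit φ.ofConv))

/-- The map `h ⊗ g ⊗ f ↦ φ(h ⊗ g) ε(f)`. -/
def inflR (φ : WithConv (H ⊗[k] H →ₗ[k] B)) : WithConv (H ⊗[k] (H ⊗[k] H) →ₗ[k] B) :=
  toConv (lift (LinearMap.smulRight Coalgebra.counit φ.ofConv).flip ∘ₗ
    (TensorProduct.assoc k H H H).symm.toLinearMap)

/-- The map `h ⊗ g ⊗ f ↦ φ(h ⊗ gf)`, a pullback along a coalgebra map. -/
def mulR (φ : WithConv (H ⊗[k] H →ₗ[k] B)) : WithConv (H ⊗[k] (H ⊗[k] H) →ₗ[k] B) :=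
  toConv (φ.ofConv ∘ₗ
    (Coalgebra.TensorProduct.map (CoalgHom.id k H) (Bialgebra.mulCoalgHom k H)).toLinearMap)

/-- The map `h ⊗ g ⊗ f ↦ φ(hg ⊗ f)`, a pullback along a coalgebra map. -/
def mulL (φ : WithConv (H ⊗[k] H →ₗ[k] B)) : WithConv (H ⊗[k] (H ⊗[k] H) →ₗ[k] B) :=
  toConv (φ.ofConv ∘ₗ
    ((Coalgebra.TensorProduct.map (Bialgebra.mulCoalgHom k H) (CoalgHom.id k H)).comp
    ((Coalgebra.TensorProduct.assoc k k H H H).symm : _ →ₗc[k] _)).toLinearMap)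

variable (φ ψ : WithConv (H ⊗[k] H →ₗ[k] B)) (Q : WithConv (H ⊗[k] (H ⊗[k] H) →ₗ[k] B))

@[simp] lemma slice_apply (h : H) (y : H ⊗[k] H) : slice Q h y = Q (h ⊗ₜ y) := rfl
@[simp] lemma sliceR_tmul (h g f : H) : sliceR Q f (h ⊗ₜ g) = Q (h ⊗ₜ (g ⊗ₜ f)) := rfl
@[simp] lemma inflL_tmul (h : H) (y : H ⊗[k] H) :
    inflL φ (h ⊗ₜ y) = Coalgebra.counit (R := k) h • φ y := rfl
@[simp] lemma inflR_tmul (h g f : H) :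
    inflR φ (h ⊗ₜ (g ⊗ₜ f)) = Coalgebra.counit (R := k) f • φ (h ⊗ₜ g) := rfl
@[simp] lemma mulR_tmul (h g f : H) : mulR φ (h ⊗ₜ (g ⊗ₜ f)) = φ (h ⊗ₜ (g * f)) := rfl
@[simp] lemma mulL_tmul (h g f : H) : mulL φ (h ⊗ₜ (g ⊗ₜ f)) = φ ((h * g) ⊗ₜ f) := rfl

lemma mulR_mul : mulR (φ * ψ) = mulR φ * mulR ψ :=
  WithConv.ext (LinearMap.convMul_comp_coalgHom_distrib _ _ _)
lemma mulL_mul : mulL (φ * ψ) = mulL φ * mulL ψ :=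
  WithConv.ext (LinearMap.convMul_comp_coalgHom_distrib _ _ _)

lemma ext2 {φ ψ : WithConv (H ⊗[k] H →ₗ[k] B)} (e : ∀ h g, φ (h ⊗ₜ g) = ψ (h ⊗ₜ g)) : φ = ψ :=
  WithConv.ext (TensorProduct.ext' e)

lemma ext3 {φ ψ : WithConv (H ⊗[k] (H ⊗[k] H) →ₗ[k] B)}
    (e : ∀ h g f, φ (h ⊗ₜ (g ⊗ₜ f)) = ψ (h ⊗ₜ (g ⊗ₜ f))) : φ = ψ :=
  WithConv.ext (TensorProduct.ext (LinearMap.ext fun h => TensorProduct.ext' (e h)))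

lemma mulR_one : mulR (1 : WithConv (H ⊗[k] H →ₗ[k] B)) = 1 := ext3 fun h g f => by
  simp only [mulR_tmul, LinearMap.convOne_apply, TensorProduct.counit_tmul, smul_eq_mul,
    Bialgebra.counit_mul]
  congr 1
  ring

lemma mulL_one : mulL (1 : WithConv (H ⊗[k] H →ₗ[k] B)) = 1 := ext3 fun h g f => by
  simp only [mulL_tmul, LinearMap.convOne_apply, TensorProduct.counit_tmul, smul_eq_mul,
    Bialgebra.counit_mul]
  congr 1
  ring

lemma inflL_one : inflL (1 : WithConv (H ⊗[k] H →ₗ[k] B)) = 1 := ext3 fun h g f => by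
  simp only [inflL_tmul, LinearMap.convOne_apply, TensorProduct.counit_tmul, smul_eq_mul,
    Algebra.smul_def, ← map_mul]
  congr 1
  ring

lemma inflR_one : inflR (1 : WithConv (H ⊗[k] H →ₗ[k] B)) = 1 := ext3 fun h g f => by
  simp only [inflR_tmul, LinearMap.convOne_apply, TensorProduct.counit_tmul, smul_eq_mul,
    Algebra.smul_def, ← map_mul]
  congr 1
  ring

lemma sum_counit_left {M : Type*} [AddCommGroup M] [Module k M] (v : H →ₗ[k] M) {h : H} {n : ℕ}
    {h1 h2 : Fin n → H} (hh : IsRep2 k H h h1 h2) :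
    ∑ i, Coalgebra.counit (R := k) (h1 i) • v (h2 i) = v h := by
  have := congrArg (fun x => v (TensorProduct.lid k H (LinearMap.rTensor H Coalgebra.counit x))) hh
  simpa using this.symm

lemma sum_counit_right {M : Type*} [AddCommGroup M] [Module k M] (v : H →ₗ[k] M) {h : H} {n : ℕ}
    {h1 h2 : Fin n → H} (hh : IsRep2 k H h h1 h2) :
    ∑ i, Coalgebra.counit (R := k) (h2 i) • v (h1 i) = v h := by
  have := congrArg (fun x => v (TensorProduct.rid k H (LinearMap.lTensor H Coalgebra.counit x))) hh
  simpa using this.symm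

lemma slice_inflL_mul (h : H) : slice (inflL φ * Q) h = φ * slice Q h := by
  refine ext2 fun g f => ?_
  obtain ⟨n, h1, h2, hh⟩ := exists_isRep2 (k := k) h
  obtain ⟨m, g1, g2, hg⟩ := exists_isRep2 (k := k) g
  obtain ⟨p, f1, f2, hf⟩ := exists_isRep2 (k := k) f
  rw [slice_apply, conv_tmul_tmul _ _ _ _ _ hh hg hf, conv_tmul _ _ _ _ hg hf,
    Finset.sum_comm]
  refine Finset.sum_congr rfl fun j _ => ?_
  rw [Finset.sum_comm]
  refine Finset.sum_congr rfl fun l _ => ?_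
  simp only [inflL_tmul, slice_apply, smul_mul_assoc, ← mul_smul_comm, ← Finset.mul_sum]
  congr 1
  exact sum_counit_left ((curry Q.ofConv).flip (g2 j ⊗ₜ f2 l)) hh

lemma slice_mul_inflL (h : H) : slice (Q * inflL φ) h = slice Q h * φ := by
  refine ext2 fun g f => ?_
  obtain ⟨n, h1, h2, hh⟩ := exists_isRep2 (k := k) h
  obtain ⟨m, g1, g2, hg⟩ := exists_isRep2 (k := k) g
  obtain ⟨p, f1, f2, hf⟩ := exists_isRep2 (k := k) f
  rw [slice_apply, conv_tmul_tmul _ _ _ _ _ hh hg hf, conv_tmul _ _ _ _ hg hf,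
    Finset.sum_comm]
  refine Finset.sum_congr rfl fun j _ => ?_
  rw [Finset.sum_comm]
  refine Finset.sum_congr rfl fun l _ => ?_
  simp only [inflL_tmul, slice_apply, mul_smul_comm, ← smul_mul_assoc, ← Finset.sum_mul]
  congr 1
  exact sum_counit_right ((curry Q.ofConv).flip (g1 j ⊗ₜ f1 l)) hh

lemma sliceR_inflR_mul (f : H) : sliceR (inflR φ * Q) f = φ * sliceR Q f := by
  refine ext2 fun h g => ?_
  obtain ⟨n, h1, h2, hh⟩ := exists_isRep2 (k := k) h
  obtain ⟨m, g1, g2, hg⟩ := exists_isRep2 (k := k) g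
  obtain ⟨p, f1, f2, hf⟩ := exists_isRep2 (k := k) f
  rw [sliceR_tmul, conv_tmul_tmul _ _ _ _ _ hh hg hf, conv_tmul _ _ _ _ hh hg]
  refine Finset.sum_congr rfl fun i _ => Finset.sum_congr rfl fun j _ => ?_
  simp only [inflR_tmul, sliceR_tmul, smul_mul_assoc, ← mul_smul_comm, ← Finset.mul_sum]
  congr 1
  exact sum_counit_left (curry (slice Q (h2 i)).ofConv (g2 j)) hf

lemma sliceR_mul_inflR (f : H) : sliceR (Q * inflR φ) f = sliceR Q f * φ := by
  refine ext2 fun h g => ?_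
  obtain ⟨n, h1, h2, hh⟩ := exists_isRep2 (k := k) h
  obtain ⟨m, g1, g2, hg⟩ := exists_isRep2 (k := k) g
  obtain ⟨p, f1, f2, hf⟩ := exists_isRep2 (k := k) f
  rw [sliceR_tmul, conv_tmul_tmul _ _ _ _ _ hh hg hf, conv_tmul _ _ _ _ hh hg]
  refine Finset.sum_congr rfl fun i _ => Finset.sum_congr rfl fun j _ => ?_
  simp only [inflR_tmul, sliceR_tmul, mul_smul_comm, ← smul_mul_assoc, ← Finset.sum_mul]
  congr 1
  exact sum_counit_right (curry (slice Q (h1 i)).ofConv (g1 j)) hf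

lemma inflL_mul : inflL (φ * ψ) = inflL φ * inflL ψ := ext3 fun h g f => by
  rw [← slice_apply (inflL φ * inflL ψ), slice_inflL_mul,
    show slice (inflL ψ) h = Coalgebra.counit (R := k) h • ψ from rfl, mul_smul_comm]
  rfl

lemma inflR_mul : inflR (φ * ψ) = inflR φ * inflR ψ := ext3 fun h g f => by
  rw [← sliceR_tmul (inflR φ * inflR ψ), sliceR_inflR_mul,
    show sliceR (inflR ψ) f = Coalgebra.counit (R := k) f • ψ from ext2 fun _ _ => rfl,
    mul_smul_comm]
  rfl

end Convolution

/-! ### The cotwisted datum -/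

section Statements

variable {k : Type*} [Field k]
variable {H : Type*} [Ring H] [HopfAlgebra k H]
variable {B : Type*} [Ring B] [Algebra k B]

/-- Proposition 2.3: a Drinfeld cotwist of a cocycle datum is again a cocycle datum,
with the same action, for the twisted product on `H` and `σ_χ = σ * χ⁻¹`. -/
theorem statement3 (act : H →ₗ[k] B →ₗ[k] B) (σ σi : H →ₗ[k] H →ₗ[k] B)
    (hcd : CocycleDatum k H B act σ σi)
    (χ χi : H →ₗ[k] H →ₗ[k] k) (hχ : DrinfeldCocycle k H χ χi)
    (tmul : H →ₗ[k] H →ₗ[k] H) (htmul : IsTwistedMul k H χ χi tmul)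
    (σχ σχi : H →ₗ[k] H →ₗ[k] B)
    (hσχ : ∀ (h g : H) {n m : ℕ} (h1 h2 : Fin n → H) (g1 g2 : Fin m → H),
      IsRep2 k H h h1 h2 → IsRep2 k H g g1 g2 →
      σχ h g = ∑ i, ∑ j, χi (h2 i) (g2 j) • σ (h1 i) (g1 j))
    (hσχi : ∀ (h g : H) {n m : ℕ} (h1 h2 : Fin n → H) (g1 g2 : Fin m → H),
      IsRep2 k H h h1 h2 → IsRep2 k H g g1 g2 →
      σχi h g = ∑ i, ∑ j, χ (h1 i) (g1 j) • σi (h2 i) (g2 j)) :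
    -- σ_χ is convolution invertible with inverse σ_χ⁻¹ = χ * σ⁻¹
    (∀ (h g : H) {n m : ℕ} (h1 h2 : Fin n → H) (g1 g2 : Fin m → H),
      IsRep2 k H h h1 h2 → IsRep2 k H g g1 g2 →
      ∑ i, ∑ j, σχ (h1 i) (g1 j) * σχi (h2 i) (g2 j)
        = (Coalgebra.counit (R := k) h * Coalgebra.counit (R := k) g) • (1 : B))
    ∧
    (∀ (h g : H) {n m : ℕ} (h1 h2 : Fin n → H) (g1 g2 : Fin m → H),
      IsRep2 k H h h1 h2 → IsRep2 k H g g1 g2 →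
      ∑ i, ∑ j, σχi (h1 i) (g1 j) * σχ (h2 i) (g2 j)
        = (Coalgebra.counit (R := k) h * Coalgebra.counit (R := k) g) • (1 : B))
    ∧
    -- normalisation
    (∀ h : H, σχ h 1 = Coalgebra.counit (R := k) h • (1 : B))
    ∧ (∀ h : H, σχ 1 h = Coalgebra.counit (R := k) h • (1 : B))
    ∧
    -- h▷(g▷b) = σ_χ(h₍₁₎,g₍₁₎)((h₍₂₎•g₍₂₎)▷b)σ_χ⁻¹(h₍₃₎,g₍₃₎)
    (∀ (h g : H) (b : B) {n m : ℕ} (h1 h2 h3 : Fin n → H) (g1 g2 g3 : Fin m → H),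
      IsRep3 k H h h1 h2 h3 → IsRep3 k H g g1 g2 g3 →
      act h (act g b)
        = ∑ i, ∑ j, σχ (h1 i) (g1 j) * act (tmul (h2 i) (g2 j)) b * σχi (h3 i) (g3 j))
    ∧
    -- (h₍₁₎▷σ_χ(g₍₁₎,f₍₁₎))σ_χ(h₍₂₎, g₍₂₎•f₍₂₎) = σ_χ(h₍₁₎,g₍₁₎)σ_χ(h₍₂₎•g₍₂₎, f)
    (∀ (h g f : H) {n m p : ℕ} (h1 h2 : Fin n → H) (g1 g2 : Fin m → H) (f1 f2 : Fin p → H),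
      IsRep2 k H h h1 h2 → IsRep2 k H g g1 g2 → IsRep2 k H f f1 f2 →
      ∑ i, ∑ j, ∑ l, act (h1 i) (σχ (g1 j) (f1 l)) * σχ (h2 i) (tmul (g2 j) (f2 l))
        = ∑ i, ∑ j, σχ (h1 i) (g1 j) * σχ (tmul (h2 i) (g2 j)) f) := by
  set S : WithConv (H ⊗[k] H →ₗ[k] B) := bmap σ with hS
  set Si : WithConv (H ⊗[k] H →ₗ[k] B) := bmap σi with hSi
  set X : WithConv (H ⊗[k] H →ₗ[k] B) := smap B χ with hX
  set Xi : WithConv (H ⊗[k] H →ₗ[k] B) := smap B χi with hXi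
  have hSSi : S * Si = 1 := ext2 fun h g => by
    obtain ⟨n, h1, h2, hh⟩ := exists_isRep2 (k := k) h
    obtain ⟨m, g1, g2, hg⟩ := exists_isRep2 (k := k) g
    rw [conv_tmul _ _ _ _ hh hg, LinearMap.convOne_apply, TensorProduct.counit_tmul]
    refine (hcd.conv_left h g h1 h2 g1 g2 hh hg).trans ?_
    rw [Algebra.algebraMap_eq_smul_one, smul_eq_mul, mul_comm]
  have hSiS : Si * S = 1 := ext2 fun h g => by
    obtain ⟨n, h1, h2, hh⟩ := exists_isRep2 (k := k) h
    obtain ⟨m, g1, g2, hg⟩ := exists_isRep2 (k := k) g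
    rw [conv_tmul _ _ _ _ hh hg, LinearMap.convOne_apply, TensorProduct.counit_tmul]
    refine (hcd.conv_right h g h1 h2 g1 g2 hh hg).trans ?_
    rw [Algebra.algebraMap_eq_smul_one, smul_eq_mul, mul_comm]
  have hXXi : X * Xi = 1 := ext2 fun h g => by
    obtain ⟨n, h1, h2, hh⟩ := exists_isRep2 (k := k) h
    obtain ⟨m, g1, g2, hg⟩ := exists_isRep2 (k := k) g
    rw [conv_tmul _ _ _ _ hh hg, LinearMap.convOne_apply, TensorProduct.counit_tmul, smul_eq_mul,
      mul_comm, ← hχ.conv_left h g h1 h2 g1 g2 hh hg]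
    simp [hX, hXi]
  have hXiX : Xi * X = 1 := ext2 fun h g => by
    obtain ⟨n, h1, h2, hh⟩ := exists_isRep2 (k := k) h
    obtain ⟨m, g1, g2, hg⟩ := exists_isRep2 (k := k) g
    rw [conv_tmul _ _ _ _ hh hg, LinearMap.convOne_apply, TensorProduct.counit_tmul, smul_eq_mul,
      mul_comm, ← hχ.conv_right h g h1 h2 g1 g2 hh hg]
    simp [hX, hXi]
  have hSχ : bmap σχ = S * Xi := ext2 fun h g => by
    obtain ⟨n, h1, h2, hh⟩ := exists_isRep2 (k := k) h
    obtain ⟨m, g1, g2, hg⟩ := exists_isRep2 (k := k) g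
    rw [conv_tmul _ _ _ _ hh hg, bmap_tmul, hσχ h g h1 h2 g1 g2 hh hg]
    simp [hS, hXi, Algebra.smul_def, Algebra.commutes]
  have hSχi : bmap σχi = X * Si := ext2 fun h g => by
    obtain ⟨n, h1, h2, hh⟩ := exists_isRep2 (k := k) h
    obtain ⟨m, g1, g2, hg⟩ := exists_isRep2 (k := k) g
    rw [conv_tmul _ _ _ _ hh hg, bmap_tmul, hσχi h g h1 h2 g1 g2 hh hg]
    simp [hSi, hX, Algebra.smul_def]
  -- Composed with any linear `v`, the twisted product is a convolution conjugate:
  -- `v(h • g) = (χ * v(mul) * χ⁻¹)(h, g)`.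
  have hT : ∀ v : H →ₗ[k] B, WithConv.toConv (v ∘ₗ TensorProduct.lift tmul)
      = X * WithConv.toConv (v ∘ₗ LinearMap.mul' k H) * Xi := fun v => ext2 fun h g => by
    obtain ⟨n, h1, h2, h3, hh⟩ := exists_isRep3 (k := k) h
    obtain ⟨m, g1, g2, g3, hg⟩ := exists_isRep3 (k := k) g
    rw [conv_conv_tmul _ _ _ _ _ hh hg]
    refine (congrArg v (htmul h g h1 h2 h3 g1 g2 g3 hh hg)).trans ?_
    simp only [map_sum, map_smul]
    refine Finset.sum_congr rfl fun i _ => Finset.sum_congr rfl fun j _ => ?_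
    change _ = algebraMap k B (χ (h1 i) (g1 j)) * v (h2 i * g2 j) * algebraMap k B (χi (h3 i) (g3 j))
    rw [← Algebra.commutes, ← Algebra.smul_def, ← Algebra.smul_def, smul_smul,
      mul_comm (χ (h1 i) (g1 j))]
  have hrep1 : IsRep2 k H (1 : H) (fun _ : Fin 1 => 1) (fun _ : Fin 1 => 1) := by
    simp [IsRep2, Algebra.TensorProduct.one_def]
  have hχi_one : ∀ h, χi h 1 = Coalgebra.counit (R := k) h := fun h => by
    obtain ⟨n, h1, h2, hh⟩ := exists_isRep2 (k := k) h
    have := hχ.conv_left h 1 h1 h2 _ _ hh hrep1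
    simp only [hχ.cocy_one, Finset.univ_unique, Finset.sum_const, Finset.card_singleton, one_smul,
      Bialgebra.counit_one, mul_one] at this
    rw [← this]
    exact (sum_counit_left (χi.flip 1) hh).symm
  have hone_χi : ∀ h, χi 1 h = Coalgebra.counit (R := k) h := fun h => by
    obtain ⟨n, h1, h2, hh⟩ := exists_isRep2 (k := k) h
    have := hχ.conv_left 1 h _ _ h1 h2 hrep1 hh
    simp only [hχ.one_cocy, Finset.univ_unique, Finset.sum_const, Finset.card_singleton, one_smul,
      Bialgebra.counit_one, one_mul] at this
    rw [← this]
    exact (sum_counit_left (χi 1) hh).symm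
  refine ⟨?_, ?_, ?_, ?_, ?_, ?_⟩
  · intro h g n m h1 h2 g1 g2 hh hg
    have := conv_tmul (bmap σχ) (bmap σχi) h g hh hg
    rw [hSχ, hSχi, show S * Xi * (X * Si) = S * (Xi * X) * Si by simp only [mul_assoc], hXiX,
      mul_one, hSSi, ← hSχ, ← hSχi] at this
    refine this.symm.trans ?_
    rw [LinearMap.convOne_apply, TensorProduct.counit_tmul, Algebra.algebraMap_eq_smul_one,
      smul_eq_mul, mul_comm]
  · intro h g n m h1 h2 g1 g2 hh hg
    have := conv_tmul (bmap σχi) (bmap σχ) h g hh hg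
    rw [hSχ, hSχi, show X * Si * (S * Xi) = X * (Si * S) * Xi by simp only [mul_assoc], hSiS,
      mul_one, hXXi, ← hSχ, ← hSχi] at this
    refine this.symm.trans ?_
    rw [LinearMap.convOne_apply, TensorProduct.counit_tmul, Algebra.algebraMap_eq_smul_one,
      smul_eq_mul, mul_comm]
  · intro h
    obtain ⟨n, h1, h2, hh⟩ := exists_isRep2 (k := k) h
    rw [hσχ h 1 h1 h2 _ _ hh hrep1]
    simp only [hcd.sigma_one, hχi_one, Finset.univ_unique, Finset.sum_const, Finset.card_singleton,
      one_smul]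
    exact sum_counit_right ((Coalgebra.counit (R := k) (A := H)).smulRight (1 : B)) hh
  · intro h
    obtain ⟨n, h1, h2, hh⟩ := exists_isRep2 (k := k) h
    rw [hσχ 1 h _ _ h1 h2 hrep1 hh]
    simp only [hcd.one_sigma, hone_χi, Finset.univ_unique, Finset.sum_const, Finset.card_singleton,
      one_smul]
    exact sum_counit_right ((Coalgebra.counit (R := k) (A := H)).smulRight (1 : B)) hh
  · intro h g b n m h1 h2 h3 g1 g2 g3 hh hg
    rw [hcd.act_act h g b h1 h2 h3 g1 g2 g3 hh hg]
    have e1 := conv_conv_tmul S (WithConv.toConv (act.flip b ∘ₗ LinearMap.mul' k H)) Si h g hh hg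
    have e2 := conv_conv_tmul (bmap σχ) (WithConv.toConv (act.flip b ∘ₗ TensorProduct.lift tmul))
      (bmap σχi) h g hh hg
    refine e1.symm.trans (Eq.trans ?_ e2)
    rw [hT, hSχ, hSχi]
    generalize WithConv.toConv (act.flip b ∘ₗ LinearMap.mul' k H) = M
    rw [show S * Xi * (X * M * Xi) * (X * Si) = S * (Xi * X) * M * (Xi * X) * Si by
      simp only [mul_assoc], hXiX, mul_one, mul_one]
  · set A : WithConv (H ⊗[k] (H ⊗[k] H) →ₗ[k] B) :=
      WithConv.toConv (TensorProduct.lift (act.compl₂ (TensorProduct.lift σ))) with hA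
    -- `A` is `h ⊗ g ⊗ f ↦ h ▷ σ(g, f)`.
    have hcoc : A * mulR S = inflR S * mulL S := ext3 fun h g f => by
      obtain ⟨n, h1, h2, hh⟩ := exists_isRep2 (k := k) h
      obtain ⟨m, g1, g2, hg⟩ := exists_isRep2 (k := k) g
      obtain ⟨p, f1, f2, hf⟩ := exists_isRep2 (k := k) f
      rw [← sliceR_tmul (inflR S * mulL S), sliceR_inflR_mul, conv_tmul _ _ _ _ hh hg,
        conv_tmul_tmul _ _ _ _ _ hh hg hf]
      exact hcd.cocycle h g f h1 h2 g1 g2 f1 f2 hh hg hf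
    have hχcoc : inflL X * mulR X = inflR X * mulL X := ext3 fun h g f => by
      obtain ⟨n, h1, h2, hh⟩ := exists_isRep2 (k := k) h
      obtain ⟨m, g1, g2, hg⟩ := exists_isRep2 (k := k) g
      obtain ⟨p, f1, f2, hf⟩ := exists_isRep2 (k := k) f
      rw [← sliceR_tmul (inflR X * mulL X), sliceR_inflR_mul, conv_tmul _ _ _ _ hh hg,
        ← slice_apply (inflL X * mulR X), slice_inflL_mul, conv_tmul _ _ _ _ hg hf]
      have := congrArg (algebraMap k B) (hχ.cocycle h g f h1 h2 g1 g2 f1 f2 hh hg hf)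
      simpa [hX] using this
    -- Both sides are the convolution inverse of the two sides of `hχcoc`.
    have hχcoci : mulR Xi * inflL Xi = mulL Xi * inflR Xi := by
      refine left_inv_eq_right_inv (a := inflL X * mulR X) ?_ ?_
      · rw [show mulR Xi * inflL Xi * (inflL X * mulR X)
            = mulR Xi * (inflL Xi * inflL X) * mulR X by simp only [mul_assoc],
          ← inflL_mul, hXiX, inflL_one, mul_one, ← mulR_mul, hXiX, mulR_one]
      · rw [hχcoc, show inflR X * mulL X * (mulL Xi * inflR Xi)
            = inflR X * (mulL X * mulL Xi) * inflR Xi by simp only [mul_assoc],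
          ← mulL_mul, hXXi, mulL_one, mul_one, ← inflR_mul, hXXi, inflR_one]
    -- Convolution forms of `h ▷ σ_χ(g, f)`, `σ_χ(h, g • f)` and, with `f` fixed, `σ_χ(h • g, f)`.
    have hA' : WithConv.toConv (TensorProduct.lift (act.compl₂ (TensorProduct.lift σχ)))
        = A * inflL Xi := ext3 fun h g f => by
      obtain ⟨m, g1, g2, hg⟩ := exists_isRep2 (k := k) g
      obtain ⟨p, f1, f2, hf⟩ := exists_isRep2 (k := k) f
      rw [← slice_apply (A * inflL Xi), slice_mul_inflL, conv_tmul _ _ _ _ hg hf]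
      refine (congrArg (act h) (hσχ g f g1 g2 f1 f2 hg hf)).trans ?_
      simp only [map_sum, map_smul]
      refine Finset.sum_congr rfl fun j _ => Finset.sum_congr rfl fun l _ => ?_
      change _ = act h (σ (g1 j) (f1 l)) * algebraMap k B (χi (g2 j) (f2 l))
      rw [← Algebra.commutes, ← Algebra.smul_def]
    have hB' : WithConv.toConv (TensorProduct.lift (σχ.compl₂ (TensorProduct.lift tmul)))
        = inflL X * (mulR S * mulR Xi) * inflL Xi := ext3 fun h g f => by
      rw [← slice_apply (inflL X * (mulR S * mulR Xi) * inflL Xi), slice_mul_inflL,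
        slice_inflL_mul, ← mulR_mul, ← hSχ]
      exact congrArg (fun w => w.ofConv (g ⊗ₜ[k] f)) (hT (σχ h))
    have hD' : ∀ f, WithConv.toConv (σχ.flip f ∘ₗ TensorProduct.lift tmul)
        = X * sliceR (mulL S * mulL Xi) f * Xi := fun f => by
      rw [hT, ← mulL_mul, ← hSχ]
      congr 2
      exact ext2 fun _ _ => rfl
    intro h g f n m p h1 h2 g1 g2 f1 f2 hh hg hf
    have eL := conv_tmul_tmul (WithConv.toConv (TensorProduct.lift (act.compl₂ (TensorProduct.lift σχ))))
      (WithConv.toConv (TensorProduct.lift (σχ.compl₂ (TensorProduct.lift tmul)))) h g f hh hg hf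
    have eR := conv_tmul (bmap σχ) (WithConv.toConv (σχ.flip f ∘ₗ TensorProduct.lift tmul)) h g hh hg
    refine eL.symm.trans (Eq.trans ?_ eR)
    rw [hA', hB', hD', hSχ,
      show A * inflL Xi * (inflL X * (mulR S * mulR Xi) * inflL Xi)
        = A * (inflL Xi * inflL X) * mulR S * (mulR Xi * inflL Xi) by simp only [mul_assoc],
      ← inflL_mul, hXiX, inflL_one, mul_one, hcoc, hχcoci,
      show S * Xi * (X * sliceR (mulL S * mulL Xi) f * Xi)
        = S * (Xi * X) * sliceR (mulL S * mulL Xi) f * Xi by simp only [mul_assoc],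
      hXiX, mul_one, ← sliceR_inflR_mul, ← sliceR_mul_inflR, sliceR_tmul]
    simp only [mul_assoc]

end Statements
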